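/- Let n ≥ 1, let Λ ⊆ ℝⁿ be a Borel set of positive Lebesgue measure, and let ξ: Λ → ℓ²(ℕ) be a weakly measurable map with ‖ξ(p)‖ = 1 for almost every p ∈ Λ. Then there exists a unique POVM M on (ℝⁿ, ℬ(ℝⁿ)) acting on L²(Λ) such that for all φ, ψ ∈ (L¹ ∩ L²)(Λ) and all Borel B ⊆ ℝⁿ: ⟨φ, M(B)ψ⟩ = (2π)^{−n} ∫_B ∫_Λ ∫_Λ e^{i(x|p₁−p₂)} ⟨ξ(p₁), ξ(p₂)⟩ conj(φ(p₁)) ψ(p₂) dp₁ dp₂ dx, and this M is covariant under U_Λ, i.e. U_Λ(q) M(B) U_Λ(q)* = M(B + q) for all q ∈ ℝⁿ and all Borel B ⊆ ℝⁿ. -/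

import Mathlib

open MeasureTheory Set
open scoped ComplexConjugate

local notation "⟪" x ", " y "⟫" => @inner ℂ _ _ x y

/-- A normalized positive operator valued measure (POVM). -/
structure POVM (Ω : Type*) [MeasurableSpace Ω] (H : Type*) [NormedAddCommGroup H]
    [InnerProductSpace ℂ H] [CompleteSpace H] where
  toFun : Set Ω → (H →L[ℂ] H)
  isPositive : ∀ B : Set Ω, MeasurableSet B → (toFun B).IsPositive
  normalized : toFun Set.univ = 1
  m_iUnion : ∀ B : ℕ → Set Ω, (∀ k, MeasurableSet (B k)) →
    Pairwise (Function.onFun Disjoint B) → ∀ φ ψ : H,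
      HasSum (fun k => ⟪φ, toFun (B k) ψ⟫) ⟪φ, toFun (⋃ k, B k) ψ⟫

/-- `ℓ²(ℕ)`. -/
noncomputable abbrev ell2 : Type := lp (fun _ : ℕ => ℂ) 2

/-- Covariance of a POVM `M` on `ℝⁿ` acting on `L²(Λ)` under a family of unitaries `U`:
`U(q) M(B) U(q)* = M(B + q)`. -/
def IsCovariantPos (n : ℕ) (Λ : Set (Fin n → ℝ))
    (U : (Fin n → ℝ) →
      (Lp ℂ 2 (volume.restrict Λ) ≃ₗᵢ[ℂ] Lp ℂ 2 (volume.restrict Λ)))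
    (M : POVM (Fin n → ℝ) (Lp ℂ 2 (volume.restrict Λ))) : Prop :=
  ∀ q : Fin n → ℝ, ∀ B : Set (Fin n → ℝ), MeasurableSet B →
    ∀ φ ψ : Lp ℂ 2 (volume.restrict Λ),
      ⟪(U q φ : Lp ℂ 2 (volume.restrict Λ)),
          M.toFun ((fun x => x + q) '' B) (U q ψ)⟫ = ⟪φ, M.toFun B ψ⟫

/-- The matrix elements of `M` on `(L¹ ∩ L²)(Λ)` are given by the kernel determined by `ξ`. -/
def MatrixFormula (n : ℕ) (Λ : Set (Fin n → ℝ)) (ξ : (Fin n → ℝ) → ell2)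
    (M : POVM (Fin n → ℝ) (Lp ℂ 2 (volume.restrict Λ))) : Prop :=
  ∀ φ ψ : (Fin n → ℝ) → ℂ,
    Integrable φ (volume.restrict Λ) → Integrable ψ (volume.restrict Λ) →
    ∀ (hφ : MemLp φ 2 (volume.restrict Λ)) (hψ : MemLp ψ 2 (volume.restrict Λ)),
    ∀ B : Set (Fin n → ℝ), MeasurableSet B →
      ⟪hφ.toLp φ, M.toFun B (hψ.toLp ψ)⟫
        = (((2 * Real.pi) ^ n : ℝ) : ℂ)⁻¹ *
          ∫ x in B, (∫ p₁, (∫ p₂,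
              Complex.exp (Complex.I * (∑ k, x k * (p₁ k - p₂ k))) *
                ⟪ξ p₁, ξ p₂⟫ * conj (φ p₁) * ψ p₂
              ∂(volume.restrict Λ)) ∂(volume.restrict Λ))

/-!
Multiply `φ ∈ L²(Λ)` by the unit vectors `ξ(p)`, extend by zero to `ℝⁿ` and take the Fourier
transform. By Plancherel's theorem this is an isometry `V` into vector-valued `L²(ℝⁿ)`, so
compressing the multiplication operators `1_B` along it gives a POVM `M(B) = V* 1_B V`. For
`φ ∈ L¹ ∩ L²` the function `V φ` is an honest Fourier integral, and expanding the pointwise inner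
product of `V φ` and `V ψ` as a double integral shows that `M` has the required matrix elements.

Uniqueness holds because `L¹ ∩ L²` is dense in `L²`. Covariance is a property of the formula alone:
multiplying `φ` and `ψ` by `e^{i(q|p)}` translates the position density by `q`, whatever the kernel,
and Lebesgue measure is translation invariant.
-/

section LpSpace

variable {α F : Type*} [MeasurableSpace α] {μ : Measure α} [NormedAddCommGroup F]

theorem dense_integrable_Lp {p : ENNReal} [Fact (1 ≤ p)] (hp : p ≠ ⊤) :
    Dense {f : Lp F p μ | Integrable f μ} := by
  refine (Lp.simpleFunc.denseRange (E := F) (μ := μ) hp).mono ?_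
  rintro _ ⟨f, rfl⟩
  have hp₀ : p ≠ 0 := (zero_lt_one.trans_le Fact.out).ne'
  exact ((SimpleFunc.memLp_iff_integrable hp₀ hp).1 (Lp.simpleFunc.memLp f)).congr
    (Lp.simpleFunc.toSimpleFunc_eq_toFun f)

section SMul

variable {𝕜 : Type*} [NormedField 𝕜] [NormedSpace 𝕜 F] {ξ : α → F}

theorem memLp_smul_of_norm_eq_one {p : ENNReal} (hξ : AEStronglyMeasurable ξ μ)
    (hξ₁ : ∀ᵐ x ∂μ, ‖ξ x‖ = 1) {φ : α → 𝕜} (hφ : MemLp φ p μ) :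
    MemLp (fun x => φ x • ξ x) p μ :=
  hφ.congr_norm (hφ.aestronglyMeasurable.smul hξ) <|
    hξ₁.mono fun x hx => by rw [norm_smul, hx, mul_one]

/-- The isometric embedding `φ ↦ φ ξ` of scalar `L^p` into vector-valued `L^p`, for an almost
everywhere unit vector field `ξ`. -/
noncomputable def smulUnitLp (p : ENNReal) [Fact (1 ≤ p)] (hξ : AEStronglyMeasurable ξ μ)
    (hξ₁ : ∀ᵐ x ∂μ, ‖ξ x‖ = 1) : Lp 𝕜 p μ →ₗᵢ[𝕜] Lp F p μ where
  toFun φ := (memLp_smul_of_norm_eq_one hξ hξ₁ (Lp.memLp φ)).toLp _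
  map_add' φ ψ := by
    rw [← MemLp.toLp_add]
    refine MemLp.toLp_congr _ _ ?_
    filter_upwards [Lp.coeFn_add φ ψ] with x hx
    simp only [hx, Pi.add_apply, add_smul]
  map_smul' c φ := by
    rw [RingHom.id_apply, ← MemLp.toLp_const_smul]
    refine MemLp.toLp_congr _ _ ?_
    filter_upwards [Lp.coeFn_smul c φ] with x hx
    simp only [hx, Pi.smul_apply, smul_assoc]
  norm_map' φ := by
    rw [LinearMap.coe_mk, AddHom.coe_mk, Lp.norm_toLp, Lp.norm_def]
    congr 1
    exact eLpNorm_congr_norm_ae (hξ₁.mono fun x hx => by rw [norm_smul, hx, mul_one])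

theorem coeFn_smulUnitLp (p : ENNReal) [Fact (1 ≤ p)] (hξ : AEStronglyMeasurable ξ μ)
    (hξ₁ : ∀ᵐ x ∂μ, ‖ξ x‖ = 1) (φ : Lp 𝕜 p μ) :
    smulUnitLp p hξ hξ₁ φ =ᵐ[μ] fun x => φ x • ξ x :=
  (memLp_smul_of_norm_eq_one hξ hξ₁ (Lp.memLp φ)).coeFn_toLp

end SMul

section ExtendByZero

variable (𝕜 : Type*) [NormedRing 𝕜] [Module 𝕜 F] [IsBoundedSMul 𝕜 F] {s : Set α}

/-- Extension by zero, as an isometric embedding of `L^p(s)` into `L^p`. -/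
noncomputable def extendByZeroLp (p : ENNReal) [Fact (1 ≤ p)] (hs : MeasurableSet s) :
    Lp F p (μ.restrict s) →ₗᵢ[𝕜] Lp F p μ where
  toFun f := ((memLp_indicator_iff_restrict hs).2 (Lp.memLp f)).toLp _
  map_add' f g := by
    rw [← MemLp.toLp_add]
    refine MemLp.toLp_congr _ _ ?_
    rw [← indicator_add']
    exact (ae_eq_restrict_iff_indicator_ae_eq hs).1 (Lp.coeFn_add f g)
  map_smul' c f := by
    rw [RingHom.id_apply, ← MemLp.toLp_const_smul]
    refine MemLp.toLp_congr _ _ ?_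
    exact ((ae_eq_restrict_iff_indicator_ae_eq hs).1 (Lp.coeFn_smul c f)).trans
      (.of_eq (indicator_const_smul s c f))
  norm_map' f := by
    rw [LinearMap.coe_mk, AddHom.coe_mk, Lp.norm_toLp, Lp.norm_def,
      eLpNorm_indicator_eq_eLpNorm_restrict hs]

theorem coeFn_extendByZeroLp (p : ENNReal) [Fact (1 ≤ p)] (hs : MeasurableSet s)
    (f : Lp F p (μ.restrict s)) : extendByZeroLp 𝕜 p hs f =ᵐ[μ] s.indicator f :=
  ((memLp_indicator_iff_restrict hs).2 (Lp.memLp f)).coeFn_toLp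

end ExtendByZero

end LpSpace

open scoped Pointwise in
theorem setIntegral_comp_smul_ofLp {ι F : Type*} [Fintype ι] [NormedAddCommGroup F]
    [NormedSpace ℝ F] (f : (ι → ℝ) → F) {c : ℝ} (hc : 0 < c) (B : Set (ι → ℝ)) :
    ∫ y in (fun y : EuclideanSpace ℝ ι => c • y.ofLp) ⁻¹' B, f (c • y.ofLp) =
      (c ^ Fintype.card ι)⁻¹ • ∫ x in B, f x := by
  calc ∫ y : EuclideanSpace ℝ ι in WithLp.ofLp ⁻¹' ((fun p => c • p) ⁻¹' B), f (c • y.ofLp)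
      = ∫ p in (fun p => c • p) ⁻¹' B, f (c • p) :=
        (PiLp.volume_preserving_ofLp ι).setIntegral_preimage_emb
          (MeasurableEquiv.toLp 2 (ι → ℝ)).symm.measurableEmbedding (fun p => f (c • p)) _
    _ = (c ^ Fintype.card ι)⁻¹ • ∫ x in B, f x := by
        rw [Measure.setIntegral_comp_smul_of_pos _ _ _ hc, preimage_smul₀ hc.ne',
          smul_inv_smul₀ hc.ne', Module.finrank_fintype_fun_eq_card]

theorem stronglyMeasurable_of_measurable_inner {α ι 𝕜 F : Type*} [MeasurableSpace α]
    [Countable ι] [RCLike 𝕜] [NormedAddCommGroup F] [InnerProductSpace 𝕜 F]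
    (b : HilbertBasis ι 𝕜 F) {ξ : α → F} (hξ : ∀ i, Measurable fun x => inner 𝕜 (b i) (ξ x)) :
    StronglyMeasurable ξ := by
  refine stronglyMeasurable_of_tendsto Filter.atTop
    (f := fun (s : Finset ι) x => ∑ i ∈ s, inner 𝕜 (b i) (ξ x) • b i)
    (fun s => Finset.stronglyMeasurable_fun_sum s fun i _ =>
      (hξ i).stronglyMeasurable.smul_const (b i)) ?_
  refine tendsto_pi_nhds.2 fun x => ?_
  simpa only [HilbertBasis.repr_apply_apply, HasSum, SummationFilter.unconditional_filter]
    using b.hasSum_repr (ξ x)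

theorem continuousLinearMap_eq_of_inner_of_dense {𝕜 H : Type*} [RCLike 𝕜]
    [NormedAddCommGroup H] [InnerProductSpace 𝕜 H] {D : Set H} (hD : Dense D) {S T : H →L[𝕜] H}
    (h : ∀ φ ∈ D, ∀ ψ ∈ D, inner 𝕜 φ (S ψ) = inner 𝕜 φ (T ψ)) : S = T :=
  DFunLike.coe_injective <| Continuous.ext_on hD S.continuous T.continuous fun ψ hψ =>
    hD.eq_of_inner_right 𝕜 fun φ hφ => h φ hφ ψ hψ

namespace POVM

variable {H Y F Ω : Type*} [NormedAddCommGroup H] [InnerProductSpace ℂ H] [CompleteSpace H]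
  [MeasurableSpace Y] {ν : Measure Y} [NormedAddCommGroup F] [InnerProductSpace ℂ F]
  [CompleteSpace F] [MeasurableSpace Ω]

/-- The effect `V* 1_s V` obtained by compressing the multiplication operator by the indicator
function of `s` along an isometry `V` into a vector-valued `L²` space. Writing it as `P* P`, where
`P` is `V` followed by restriction to `s`, makes positivity evident. -/
noncomputable def compressedEffect (V : H →ₗᵢ[ℂ] Lp F 2 ν) (s : Set Y) : H →L[ℂ] H :=
  let P := LpToLpRestrictCLM Y F ℂ ν 2 s ∘L V.toContinuousLinearMap
  ContinuousLinearMap.adjoint P ∘L P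

theorem inner_compressedEffect (V : H →ₗᵢ[ℂ] Lp F 2 ν) (s : Set Y) (φ ψ : H) :
    ⟪φ, compressedEffect V s ψ⟫ = ∫ y in s, ⟪V φ y, V ψ y⟫ ∂ν := by
  rw [compressedEffect, ContinuousLinearMap.comp_apply, ContinuousLinearMap.adjoint_inner_right,
    L2.inner_def]
  refine integral_congr_ae ?_
  filter_upwards [LpToLpRestrictCLM_coeFn ℂ s (V φ), LpToLpRestrictCLM_coeFn ℂ s (V ψ)]
    with y hφ hψ
  simp only [ContinuousLinearMap.comp_apply, LinearIsometry.coe_toContinuousLinearMap, hφ, hψ]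

/-- The POVM `B ↦ V* 1_{g⁻¹ B} V`, the compression along the isometry `V` of the spectral measure
of multiplication by `g`. -/
noncomputable def compress (V : H →ₗᵢ[ℂ] Lp F 2 ν) {g : Y → Ω} (hg : Measurable g) :
    POVM Ω H where
  toFun B := compressedEffect V (g ⁻¹' B)
  isPositive _ _ := ContinuousLinearMap.isPositive_adjoint_comp_self _
  normalized := by
    refine ContinuousLinearMap.ext fun ψ => ext_inner_left ℂ fun φ => ?_
    rw [inner_compressedEffect, preimage_univ, Measure.restrict_univ, ← L2.inner_def,
      V.inner_map_map, one_apply_eq_self]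
  m_iUnion B hB hd φ ψ := by
    simp only [inner_compressedEffect, preimage_iUnion]
    exact hasSum_integral_iUnion (fun k => hg (hB k)) (fun i j hij => (hd hij).preimage g)
      (L2.integrable_inner (𝕜 := ℂ) (V φ) (V ψ)).integrableOn

theorem inner_compress (V : H →ₗᵢ[ℂ] Lp F 2 ν) {g : Y → Ω} (hg : Measurable g) (B : Set Ω)
    (φ ψ : H) : ⟪φ, (compress V hg).toFun B ψ⟫ = ∫ y in g ⁻¹' B, ⟪V φ y, V ψ y⟫ ∂ν :=
  inner_compressedEffect V _ φ ψ

end POVM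

section Fourier

open FourierTransform SchwartzMap VectorFourier

section NormedSpace

variable {F : Type*} [NormedAddCommGroup F] [NormedSpace ℂ F]

theorem fourierIntegral_indicator {𝕜 V W : Type*} [CommRing 𝕜] [AddCommGroup V] [Module 𝕜 V]
    [MeasurableSpace V] [AddCommGroup W] [Module 𝕜 W] (e : AddChar 𝕜 Circle) (μ : Measure V)
    (L : V →ₗ[𝕜] W →ₗ[𝕜] 𝕜) {s : Set V} (hs : MeasurableSet s) (f : V → F) :
    fourierIntegral e μ L (s.indicator f) = fourierIntegral e (μ.restrict s) L f := by
  ext w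
  simp only [fourierIntegral, ← integral_indicator hs]
  congr! 2 with v
  exact (indicator_const_smul_apply s _ f v).symm

theorem fourier_comp_ofLp {ι : Type*} [Fintype ι] (f : (ι → ℝ) → F) (y : EuclideanSpace ℝ ι) :
    𝓕 (f ∘ WithLp.ofLp : EuclideanSpace ℝ ι → F) y =
      fourierIntegral Real.probChar volume (dotProductBilin ℝ ℝ) f ((2 * Real.pi) • y.ofLp) := by
  rw [Real.fourier_eq', fourierIntegral_probChar, ← (PiLp.volume_preserving_ofLp ι).integral_comp
    (MeasurableEquiv.toLp 2 (ι → ℝ)).symm.measurableEmbedding]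
  congr! 3
  simp [PiLp.inner_apply, dotProduct, Finset.mul_sum, mul_comm]

end NormedSpace

variable {F : Type*} [NormedAddCommGroup F] [InnerProductSpace ℂ F] [CompleteSpace F]

theorem coeFn_fourier_Lp_two {E : Type*} [NormedAddCommGroup E] [InnerProductSpace ℝ E]
    [FiniteDimensional ℝ E] [MeasurableSpace E] [BorelSpace E]
    {f : Lp F 2 (volume : Measure E)} (hf : Integrable f) :
    (𝓕 f : Lp F 2 (volume : Measure E)) =ᵐ[volume] 𝓕 (f : E → F) := by
  refine ae_eq_of_integral_contDiff_smul_eq ((Lp.memLp _).locallyIntegrable one_le_two)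
    (fourierIntegral_continuous Real.continuous_fourierChar (L := innerₗ E) continuous_inner
      hf).locallyIntegrable fun g hg hgc => ?_
  -- Tested against a Schwartz function, both sides move the Fourier transform onto that function.
  have hGc : HasCompactSupport fun x => (g x : ℂ) :=
    hgc.comp_left (g := fun r : ℝ => (r : ℂ)) Complex.ofReal_zero
  let G : 𝓢(E, ℂ) := hGc.toSchwartzMap (Complex.ofRealCLM.contDiff.comp hg)
  have hG (x : E) : G x = (g x : ℂ) := rfl
  calc ∫ x, g x • (𝓕 f : Lp F 2 (volume : Measure E)) x
      = ∫ x, G x • (𝓕 f : Lp F 2 (volume : Measure E)) x := by simp [hG]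
    _ = ∫ x, (𝓕 G) x • f x := by
      have h := congrArg (fun T => T G) (Lp.fourier_toTemperedDistribution_eq f)
      simpa only [TemperedDistribution.fourier_apply, Lp.toTemperedDistribution_apply] using h.symm
    _ = ∫ x, G x • 𝓕 (f : E → F) x := by
      have h := integral_bilin_fourierIntegral_eq_flip (.lsmul ℂ ℂ) (L := innerₗ E)
        (μ := volume) (ν := volume) Real.continuous_fourierChar continuous_inner G.integrable hf
      simpa [SchwartzMap.fourier_coe] using! h
    _ = ∫ x, g x • 𝓕 (f : E → F) x := by simp [hG]

theorem inner_fourierIntegral {𝕜 V W : Type*} [CommRing 𝕜] [TopologicalSpace 𝕜]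
    [IsTopologicalRing 𝕜] [AddCommGroup V] [Module 𝕜 V] [TopologicalSpace V] [MeasurableSpace V]
    [BorelSpace V] [AddCommGroup W] [Module 𝕜 W] [TopologicalSpace W] {e : AddChar 𝕜 Circle}
    {μ : Measure V} {L : V →ₗ[𝕜] W →ₗ[𝕜] 𝕜} (he : Continuous e)
    (hL : Continuous fun p : V × W => L p.1 p.2) {f g : V → F} (hf : Integrable f μ)
    (hg : Integrable g μ) (w : W) :
    ⟪fourierIntegral e μ L f w, fourierIntegral e μ L g w⟫ =
      ∫ v₁, ∫ v₂, e (L (v₁ - v₂) w) • ⟪f v₁, g v₂⟫ ∂μ ∂μ := by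
  have hf' := (fourierIntegral_convergent_iff he hL w).2 hf
  have hg' := (fourierIntegral_convergent_iff he hL w).2 hg
  have integrand (v₁ v₂ : V) : e (L (v₁ - v₂) w) • ⟪f v₁, g v₂⟫ =
      ⟪e (-L v₁ w) • f v₁, e (-L v₂ w) • g v₂⟫ := by
    rw [map_sub, LinearMap.sub_apply, sub_eq_add_neg, AddChar.map_add_eq_mul]
    simp only [Circle.smul_def, inner_smul_left, inner_smul_right, ← Circle.coe_inv_eq_conj,
      ← AddChar.map_neg_eq_inv, neg_neg, smul_eq_mul, Circle.coe_mul]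
    ring
  calc ⟪fourierIntegral e μ L f w, fourierIntegral e μ L g w⟫
      = conj (∫ v, ⟪fourierIntegral e μ L g w, e (-L v w) • f v⟫ ∂μ) := by
        rw [integral_inner hf', inner_conj_symm, fourierIntegral]
    _ = ∫ v₁, ⟪e (-L v₁ w) • f v₁, fourierIntegral e μ L g w⟫ ∂μ := by
        simp_rw [← integral_conj, inner_conj_symm]
    _ = ∫ v₁, ∫ v₂, e (L (v₁ - v₂) w) • ⟪f v₁, g v₂⟫ ∂μ ∂μ := by
        simp_rw [integrand, integral_inner hg', fourierIntegral]

end Fourier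

section PositionObservable

variable {n : ℕ} {μ : Measure (Fin n → ℝ)}

/-- The plane wave `p ↦ e^{i(q|p)}`. -/
noncomputable def planeWave (q p : Fin n → ℝ) : ℂ :=
  Complex.exp (Complex.I * (q ⬝ᵥ p : ℝ))

/-- Up to the factor `(2π)⁻ⁿ`, the position density at `x` of the matrix element between `φ` and `ψ`
that belongs to the kernel `k` on momentum space. The measure `μ` there stands for Lebesgue measure
on `Λ`. -/
noncomputable def positionDensity (μ : Measure (Fin n → ℝ))
    (k : (Fin n → ℝ) → (Fin n → ℝ) → ℂ) (φ ψ : (Fin n → ℝ) → ℂ) (x : Fin n → ℝ) : ℂ :=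
  ∫ p₁, ∫ p₂, planeWave x (p₁ - p₂) * k p₁ p₂ * conj (φ p₁) * ψ p₂ ∂μ ∂μ

/-- The POVM `M` has momentum kernel `k` if `M(B)` has the matrix elements
`(2π)⁻ⁿ ∫_B ∫ ∫ e^{i(x|p₁-p₂)} k(p₁, p₂) conj(φ(p₁)) ψ(p₂) dp₁ dp₂ dx` on `L¹ ∩ L²`. The notion
`MatrixFormula n Λ ξ` is the special case `k p₁ p₂ = ⟪ξ p₁, ξ p₂⟫`. -/
def HasMomentumKernel (M : POVM (Fin n → ℝ) (Lp ℂ 2 μ))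
    (k : (Fin n → ℝ) → (Fin n → ℝ) → ℂ) : Prop :=
  ∀ φ ψ : (Fin n → ℝ) → ℂ, Integrable φ μ → Integrable ψ μ →
    ∀ (hφ : MemLp φ 2 μ) (hψ : MemLp ψ 2 μ), ∀ B : Set (Fin n → ℝ), MeasurableSet B →
      ⟪hφ.toLp φ, M.toFun B (hψ.toLp ψ)⟫ =
        (((2 * Real.pi) ^ n : ℝ) : ℂ)⁻¹ * ∫ x in B, positionDensity μ k φ ψ x

theorem norm_planeWave (q p : Fin n → ℝ) : ‖planeWave q p‖ = 1 := by
  simp [planeWave, Complex.norm_exp]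

theorem conj_planeWave (q p : Fin n → ℝ) : conj (planeWave q p) = planeWave q (-p) := by
  simp [planeWave, ← Complex.exp_conj]

theorem memLp_planeWave_mul {r : ENNReal} (q : Fin n → ℝ) {φ : (Fin n → ℝ) → ℂ}
    (hφ : MemLp φ r μ) : MemLp (fun p => planeWave q p * φ p) r μ := by
  have hq : Continuous (planeWave q) := by unfold planeWave; fun_prop
  simpa only [smul_eq_mul, mul_comm] using
    memLp_smul_of_norm_eq_one hq.aestronglyMeasurable (.of_forall (norm_planeWave q)) hφ

theorem integrable_planeWave_mul (q : Fin n → ℝ) {φ : (Fin n → ℝ) → ℂ}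
    (hφ : Integrable φ μ) : Integrable (fun p => planeWave q p * φ p) μ :=
  memLp_one_iff_integrable.1 (memLp_planeWave_mul q (memLp_one_iff_integrable.2 hφ))

theorem positionDensity_planeWave_mul (k : (Fin n → ℝ) → (Fin n → ℝ) → ℂ)
    (φ ψ : (Fin n → ℝ) → ℂ) (q x : Fin n → ℝ) :
    positionDensity μ k (fun p => planeWave q p * φ p) (fun p => planeWave q p * ψ p) (x + q) =
      positionDensity μ k φ ψ x := by
  have phase (p₁ p₂ : Fin n → ℝ) :
      planeWave (x + q) (p₁ - p₂) * conj (planeWave q p₁) * planeWave q p₂ =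
        planeWave x (p₁ - p₂) := by
    rw [conj_planeWave]
    simp only [planeWave, ← Complex.exp_add, add_dotProduct, dotProduct_sub, dotProduct_neg]
    push_cast
    ring_nf
  simp_rw [positionDensity, ← phase, map_mul]
  congr! 4
  ring

theorem setIntegral_positionDensity_image_add (k : (Fin n → ℝ) → (Fin n → ℝ) → ℂ)
    (φ ψ : (Fin n → ℝ) → ℂ) (q : Fin n → ℝ) (B : Set (Fin n → ℝ)) :
    ∫ x in (fun x => x + q) '' B,
        positionDensity μ k (fun p => planeWave q p * φ p) (fun p => planeWave q p * ψ p) x =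
      ∫ x in B, positionDensity μ k φ ψ x := by
  rw [(measurePreserving_add_right volume q).setIntegral_image_emb
    (MeasurableEquiv.addRight q).measurableEmbedding]
  simp_rw [positionDensity_planeWave_mul]

namespace HasMomentumKernel

variable {M M' : POVM (Fin n → ℝ) (Lp ℂ 2 μ)} {k : (Fin n → ℝ) → (Fin n → ℝ) → ℂ}
  {B : Set (Fin n → ℝ)}

theorem inner_coeFn (hM : HasMomentumKernel M k) {φ ψ : Lp ℂ 2 μ} (hφ : Integrable φ μ)
    (hψ : Integrable ψ μ) (hB : MeasurableSet B) :
    ⟪φ, M.toFun B ψ⟫ =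
      (((2 * Real.pi) ^ n : ℝ) : ℂ)⁻¹ * ∫ x in B, positionDensity μ k φ ψ x := by
  simpa only [Lp.toLp_coeFn] using hM φ ψ hφ hψ (Lp.memLp φ) (Lp.memLp ψ) B hB

theorem toFun_eq (hM : HasMomentumKernel M k) (hM' : HasMomentumKernel M' k)
    (hB : MeasurableSet B) : M.toFun B = M'.toFun B :=
  continuousLinearMap_eq_of_inner_of_dense (dense_integrable_Lp (p := 2) ENNReal.ofNat_ne_top)
    fun _ hφ _ hψ => (hM.inner_coeFn hφ hψ hB).trans (hM'.inner_coeFn hφ hψ hB).symm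

theorem adjoint_comp_toFun_comp (hM : HasMomentumKernel M k) {q : Fin n → ℝ}
    {U : Lp ℂ 2 μ →L[ℂ] Lp ℂ 2 μ} (hU : ∀ φ, U φ =ᵐ[μ] fun p => planeWave q p * φ p)
    (hB : MeasurableSet B) :
    ContinuousLinearMap.adjoint U ∘L M.toFun ((fun x => x + q) '' B) ∘L U = M.toFun B := by
  have hBq : MeasurableSet ((fun x => x + q) '' B) :=
    (MeasurableEquiv.addRight q).measurableEmbedding.measurableSet_image.2 hB
  have hU' (φ : Lp ℂ 2 μ) : U φ = (memLp_planeWave_mul q (Lp.memLp φ)).toLp _ :=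
    Lp.ext ((hU φ).trans (MemLp.coeFn_toLp _).symm)
  refine continuousLinearMap_eq_of_inner_of_dense
    (dense_integrable_Lp (p := 2) ENNReal.ofNat_ne_top) fun φ hφ ψ hψ => ?_
  rw [ContinuousLinearMap.comp_apply, ContinuousLinearMap.adjoint_inner_right,
    ContinuousLinearMap.comp_apply, hU', hU', hM.inner_coeFn hφ hψ hB,
    hM _ _ (integrable_planeWave_mul q hφ) (integrable_planeWave_mul q hψ) _ _ _ hBq,
    setIntegral_positionDensity_image_add]

end HasMomentumKernel

section Existence

open VectorFourier

variable {F : Type*} [NormedAddCommGroup F] [InnerProductSpace ℂ F] [CompleteSpace F]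
  {ξ : (Fin n → ℝ) → F}

/-- The Fourier transform `x ↦ ∫ e^{-i(x|p)} φ(p) ξ(p) dμ(p)`, normalized without factors `2π`. -/
noncomputable def waveTransform (μ : Measure (Fin n → ℝ)) (ξ : (Fin n → ℝ) → F)
    (φ : (Fin n → ℝ) → ℂ) : (Fin n → ℝ) → F :=
  fourierIntegral Real.probChar μ (dotProductBilin ℝ ℝ) fun p => φ p • ξ p

theorem positionDensity_inner_eq_inner_waveTransform (hξ : AEStronglyMeasurable ξ μ)
    (hξ₁ : ∀ᵐ p ∂μ, ‖ξ p‖ = 1) {φ ψ : (Fin n → ℝ) → ℂ} (hφ : Integrable φ μ)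
    (hψ : Integrable ψ μ) (x : Fin n → ℝ) :
    positionDensity μ (fun p₁ p₂ => ⟪ξ p₁, ξ p₂⟫) φ ψ x =
      ⟪waveTransform μ ξ φ x, waveTransform μ ξ ψ x⟫ := by
  have integrable_smul {χ : (Fin n → ℝ) → ℂ} (hχ : Integrable χ μ) :
      Integrable (fun p => χ p • ξ p) μ :=
    memLp_one_iff_integrable.1 <|
      memLp_smul_of_norm_eq_one hξ hξ₁ (memLp_one_iff_integrable.2 hχ)
  rw [waveTransform, waveTransform, inner_fourierIntegral Real.continuous_probChar
    (by simp only [dotProductBilin_apply_apply]; fun_prop) (integrable_smul hφ)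
    (integrable_smul hψ), positionDensity]
  congr! 4 with p₁ p₂
  rw [planeWave, dotProduct_comm, Circle.smul_def, dotProductBilin_apply_apply,
    Real.probChar_apply, smul_eq_mul, inner_smul_left, inner_smul_right, mul_comm Complex.I]
  ring

variable {Λ : Set (Fin n → ℝ)}

/-- The isometry of `L²(Λ)` into vector-valued `L²(ℝⁿ)` which multiplies by `ξ`, extends by zero
and takes the Fourier transform; compressing along it produces the POVM determined by `ξ`.
Its target lives on `EuclideanSpace` since that is where the `L²` Fourier transform is defined. -/
noncomputable def waveIsometry (hΛ : MeasurableSet Λ)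
    (hξ : AEStronglyMeasurable ξ (volume.restrict Λ))
    (hξ₁ : ∀ᵐ p ∂volume.restrict Λ, ‖ξ p‖ = 1) :
    Lp ℂ 2 (volume.restrict Λ) →ₗᵢ[ℂ] Lp F 2 (volume : Measure (EuclideanSpace ℝ (Fin n))) :=
  (Lp.fourierTransformₗᵢ (EuclideanSpace ℝ (Fin n)) F).toLinearIsometry.comp <|
    (Lp.compMeasurePreservingₗᵢ ℂ WithLp.ofLp (PiLp.volume_preserving_ofLp (Fin n))).comp <|
      (extendByZeroLp ℂ 2 hΛ).comp (smulUnitLp 2 hξ hξ₁)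

theorem coeFn_waveIsometry_toLp (hΛ : MeasurableSet Λ)
    (hξ : AEStronglyMeasurable ξ (volume.restrict Λ))
    (hξ₁ : ∀ᵐ p ∂volume.restrict Λ, ‖ξ p‖ = 1) {φ : (Fin n → ℝ) → ℂ}
    (hφ : Integrable φ (volume.restrict Λ)) (hφ₂ : MemLp φ 2 (volume.restrict Λ)) :
    waveIsometry hΛ hξ hξ₁ (hφ₂.toLp φ) =ᵐ[volume]
      fun y => waveTransform (volume.restrict Λ) ξ φ ((2 * Real.pi) • y.ofLp) := by
  have hofLp := PiLp.volume_preserving_ofLp (Fin n)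
  let f : Lp F 2 (volume : Measure (EuclideanSpace ℝ (Fin n))) :=
    Lp.compMeasurePreservingₗᵢ ℂ WithLp.ofLp hofLp
      (extendByZeroLp ℂ 2 hΛ (smulUnitLp 2 hξ hξ₁ (hφ₂.toLp φ)))
  have smul_ae : smulUnitLp 2 hξ hξ₁ (hφ₂.toLp φ) =ᵐ[volume.restrict Λ] fun p => φ p • ξ p := by
    filter_upwards [coeFn_smulUnitLp 2 hξ hξ₁ (hφ₂.toLp φ), hφ₂.coeFn_toLp] with p hp hφp
    rw [hp, hφp]
  have extend_ae : extendByZeroLp ℂ 2 hΛ (smulUnitLp 2 hξ hξ₁ (hφ₂.toLp φ)) =ᵐ[volume]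
      Λ.indicator fun p => φ p • ξ p :=
    (coeFn_extendByZeroLp ℂ 2 hΛ _).trans ((ae_eq_restrict_iff_indicator_ae_eq hΛ).1 smul_ae)
  have f_ae : f =ᵐ[volume] (Λ.indicator fun p => φ p • ξ p) ∘ WithLp.ofLp :=
    (Lp.coeFn_compMeasurePreserving _ hofLp).trans
      (hofLp.quasiMeasurePreserving.ae_eq_comp extend_ae)
  have smul_integrable : Integrable (Λ.indicator fun p => φ p • ξ p) :=
    (integrable_indicator_iff hΛ).2 <| memLp_one_iff_integrable.1 <|
      memLp_smul_of_norm_eq_one hξ hξ₁ (memLp_one_iff_integrable.2 hφ)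
  have f_integrable : Integrable f :=
    (hofLp.integrable_comp_of_integrable smul_integrable).congr f_ae.symm
  refine (coeFn_fourier_Lp_two f_integrable).trans (.of_forall fun y => ?_)
  rw [Real.fourier_congr_ae f_ae, fourier_comp_ofLp, fourierIntegral_indicator _ _ _ hΛ,
    waveTransform]

theorem exists_hasMomentumKernel_inner (hΛ : MeasurableSet Λ)
    (hξ : AEStronglyMeasurable ξ (volume.restrict Λ))
    (hξ₁ : ∀ᵐ p ∂volume.restrict Λ, ‖ξ p‖ = 1) :
    ∃ M : POVM (Fin n → ℝ) (Lp ℂ 2 (volume.restrict Λ)),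
      HasMomentumKernel M fun p₁ p₂ => ⟪ξ p₁, ξ p₂⟫ := by
  have hmeas : Measurable fun y : EuclideanSpace ℝ (Fin n) => (2 * Real.pi) • y.ofLp :=
    (PiLp.volume_preserving_ofLp (Fin n)).measurable.const_smul (2 * Real.pi)
  refine ⟨POVM.compress (waveIsometry hΛ hξ hξ₁) hmeas, fun φ ψ hφ hψ hφ₂ hψ₂ B _ => ?_⟩
  let g (x : Fin n → ℝ) : ℂ := ⟪waveTransform (volume.restrict Λ) ξ φ x,
    waveTransform (volume.restrict Λ) ξ ψ x⟫
  have inner_waveIsometry_ae : (fun y => ⟪waveIsometry hΛ hξ hξ₁ (hφ₂.toLp φ) y,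
      waveIsometry hΛ hξ hξ₁ (hψ₂.toLp ψ) y⟫) =ᵐ[volume] fun y => g ((2 * Real.pi) • y.ofLp) := by
    filter_upwards [coeFn_waveIsometry_toLp hΛ hξ hξ₁ hφ hφ₂,
      coeFn_waveIsometry_toLp hΛ hξ hξ₁ hψ hψ₂] with y hφy hψy
    rw [hφy, hψy]
  rw [POVM.inner_compress, integral_congr_ae (ae_restrict_of_ae inner_waveIsometry_ae),
    setIntegral_comp_smul_ofLp g Real.two_pi_pos, Fintype.card_fin, Complex.real_smul,
    Complex.ofReal_inv]
  simp_rw [positionDensity_inner_eq_inner_waveTransform hξ hξ₁ hφ hψ, g]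

end Existence

end PositionObservable

theorem stmt2_general {n : ℕ} {Λ : Set (Fin n → ℝ)} (hΛ : MeasurableSet Λ)
    {U : (Fin n → ℝ) → (Lp ℂ 2 (volume.restrict Λ) ≃ₗᵢ[ℂ] Lp ℂ 2 (volume.restrict Λ))}
    (hU : ∀ q φ, U q φ =ᵐ[volume.restrict Λ] fun p => planeWave q p * φ p)
    {F : Type*} [NormedAddCommGroup F] [InnerProductSpace ℂ F] [CompleteSpace F]
    {ξ : (Fin n → ℝ) → F} (hξ : AEStronglyMeasurable ξ (volume.restrict Λ))
    (hξ₁ : ∀ᵐ p ∂volume.restrict Λ, ‖ξ p‖ = 1) :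
    (∃ M : POVM (Fin n → ℝ) (Lp ℂ 2 (volume.restrict Λ)),
      HasMomentumKernel M fun p₁ p₂ => ⟪ξ p₁, ξ p₂⟫) ∧
    (∀ M M' : POVM (Fin n → ℝ) (Lp ℂ 2 (volume.restrict Λ)),
      HasMomentumKernel M (fun p₁ p₂ => ⟪ξ p₁, ξ p₂⟫) →
      HasMomentumKernel M' (fun p₁ p₂ => ⟪ξ p₁, ξ p₂⟫) →
      ∀ B : Set (Fin n → ℝ), MeasurableSet B → M.toFun B = M'.toFun B) ∧
    (∀ M : POVM (Fin n → ℝ) (Lp ℂ 2 (volume.restrict Λ)),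
      HasMomentumKernel M (fun p₁ p₂ => ⟪ξ p₁, ξ p₂⟫) → IsCovariantPos n Λ U M) := by
  refine ⟨exists_hasMomentumKernel_inner hΛ hξ hξ₁, fun M M' hM hM' B hB => hM.toFun_eq hM' hB,
    fun M hM q B hB φ ψ => ?_⟩
  rw [← hM.adjoint_comp_toFun_comp
      (U := (U q).toLinearIsometry.toContinuousLinearMap) (hU q) hB,
    ContinuousLinearMap.comp_apply, ContinuousLinearMap.adjoint_inner_right]
  rfl

theorem stmt2 (n : ℕ) (hn : 1 ≤ n) (Λ : Set (Fin n → ℝ)) (hΛmeas : MeasurableSet Λ)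
    (hΛpos : 0 < volume Λ)
    (U : (Fin n → ℝ) →
      (Lp ℂ 2 (volume.restrict Λ) ≃ₗᵢ[ℂ] Lp ℂ 2 (volume.restrict Λ)))
    (hU : ∀ q : Fin n → ℝ, ∀ φ : Lp ℂ 2 (volume.restrict Λ),
      (U q φ : (Fin n → ℝ) → ℂ) =ᵐ[volume.restrict Λ]
        fun p => Complex.exp (Complex.I * (∑ k, q k * p k)) * φ p)
    (ξ : (Fin n → ℝ) → ell2)
    (hξmeas : ∀ e : ell2, Measurable fun p => ⟪e, ξ p⟫)
    (hξnorm : ∀ᵐ p ∂(volume.restrict Λ), ‖ξ p‖ = 1) :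
    -- existence
    (∃ M : POVM (Fin n → ℝ) (Lp ℂ 2 (volume.restrict Λ)), MatrixFormula n Λ ξ M) ∧
    -- uniqueness (as observables, i.e. on measurable sets)
    (∀ M M' : POVM (Fin n → ℝ) (Lp ℂ 2 (volume.restrict Λ)),
      MatrixFormula n Λ ξ M → MatrixFormula n Λ ξ M' →
      ∀ B : Set (Fin n → ℝ), MeasurableSet B → M.toFun B = M'.toFun B) ∧
    -- covariance
    (∀ M : POVM (Fin n → ℝ) (Lp ℂ 2 (volume.restrict Λ)),
      MatrixFormula n Λ ξ M → IsCovariantPos n Λ U M) := by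
  exact stmt2_general hΛmeas hU (stronglyMeasurable_of_measurable_inner
    ⟨LinearIsometryEquiv.refl ℂ ell2⟩ fun i => hξmeas _).aestronglyMeasurable hξnorm
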